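/- Let X be a square-integrable random vector in ℝ^d and Z a random variable taking values in the one-hot label set {z_1,…,z_k}, each with positive probability. Let L : ℝ^k × {z_1,…,z_k} → [0,∞) be convex in its first argument. Suppose every class-conditional mean equals the unconditional mean, E[X | Z = z] = E[X], and every class-conditional second moment matrix equals the unconditional one, E[X Xᵀ | Z = z] = E[X Xᵀ], for all classes z. Then no quadratic predictor η(x) = A[x,x] + Bx + c (with A an ℝ^k-valued symmetric bilinear form on ℝ^d, B ∈ ℝ^{k×d}, c ∈ ℝ^k) achieves expected loss E[L(η(X), Z)] strictly below the trivially attainable loss inf_{c ∈ ℝ^k} E[L(c, Z)]. -/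

import Mathlib

open MeasureTheory ProbabilityTheory

/-- A quadratic predictor `η(x) = A[x,x] + Bx + c`, where `A` is an `ℝ^k`-valued
bilinear form on `ℝ^d` (given as a family of matrices), `B ∈ ℝ^{k×d}` and `c ∈ ℝ^k`. -/
noncomputable def quadPred {d k : ℕ} (A : Fin k → Matrix (Fin d) (Fin d) ℝ)
    (B : Matrix (Fin k) (Fin d) ℝ) (c : Fin k → ℝ) : (Fin d → ℝ) → (Fin k → ℝ) :=
  fun x j => (∑ i, ∑ i', A j i i' * x i * x i') + B.mulVec x j + c j

/-!
A quadratic predictor is a linear combination of the constants, the `X i` and the `X i * X i'`, so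
matching first and second moments give `η(X)` the same mean `m` on every class. Once the class `j`
is fixed the loss is the convex function `L · j`, so Jensen's inequality on each class shows that
the constant predictor `m` does at least as well as `η`.
-/

/-- `f` is mean independent of the class variable `Z`: on every class of positive measure the
conditional mean of `f` equals its unconditional mean. The moment conditions on `X` are instances of
this notion, which is closed under linear combinations. Null classes are exempt, because there
`μ[|Z ⁻¹' {j}]` is the zero measure. -/
structure MeanIndep {Ω ι E : Type*} [MeasurableSpace Ω] [NormedAddCommGroup E] [NormedSpace ℝ E]
    (f : Ω → E) (Z : Ω → ι) (μ : Measure Ω) : Prop where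
  integrable : Integrable f μ
  integral_cond : ∀ j, μ (Z ⁻¹' {j}) ≠ 0 → ∫ ω, f ω ∂μ[|Z ⁻¹' {j}] = ∫ ω, f ω ∂μ

section

variable {Ω ι E : Type*} [MeasurableSpace Ω] [NormedAddCommGroup E] {μ : Measure Ω} {Z : Ω → ι}

lemma integrable_cond {f : Ω → E} (hf : Integrable f μ) {s : Set Ω} (hs : μ s ≠ 0) :
    Integrable f μ[|s] :=
  hf.restrict.smul_measure (ENNReal.inv_ne_top.2 hs)

lemma integral_eq_sum_integral_cond_fiber [NormedSpace ℝ E] [IsFiniteMeasure μ] [Fintype ι]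
    [MeasurableSpace ι] [DiscreteMeasurableSpace ι] (hZ : Measurable Z) {f : Ω → E}
    (hf : Integrable f μ) :
    ∫ ω, f ω ∂μ = ∑ j, μ.real (Z ⁻¹' {j}) • ∫ ω, f ω ∂μ[|Z ⁻¹' {j}] := by
  have hsum := sum_meas_smul_cond_fiber hZ μ
  have hf_fiber : ∀ j ∈ Finset.univ, Integrable f (μ (Z ⁻¹' {j}) • μ[|Z ⁻¹' {j}]) :=
    integrable_finsetSum_measure.1 (hsum.symm ▸ hf)
  calc ∫ ω, f ω ∂μ
      = ∫ ω, f ω ∂(∑ j, μ (Z ⁻¹' {j}) • μ[|Z ⁻¹' {j}]) := by rw [hsum]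
    _ = ∑ j, ∫ ω, f ω ∂(μ (Z ⁻¹' {j}) • μ[|Z ⁻¹' {j}]) := integral_finsetSum_measure hf_fiber
    _ = ∑ j, μ.real (Z ⁻¹' {j}) • ∫ ω, f ω ∂μ[|Z ⁻¹' {j}] :=
      Finset.sum_congr rfl fun _ _ => integral_smul_measure _ _

lemma ae_cond_fiber_apply_eq [MeasurableSpace ι] [MeasurableSingletonClass ι] (hZ : Measurable Z)
    {β : Type*} (F : Ω → ι → β) (j : ι) :
    (fun ω => F ω (Z ω)) =ᵐ[μ[|Z ⁻¹' {j}]] fun ω => F ω j :=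
  (ae_cond_mem (hZ (measurableSet_singleton j))).mono fun ω hω => congrArg (F ω) hω

end

namespace MeanIndep

variable {Ω ι E : Type*} [MeasurableSpace Ω] [NormedAddCommGroup E] [NormedSpace ℝ E]
  {μ : Measure Ω} {Z : Ω → ι} {f g : Ω → E}

lemma const [CompleteSpace E] [IsProbabilityMeasure μ] (Z : Ω → ι) (v : E) :
    MeanIndep (fun _ => v) Z μ where
  integrable := integrable_const v
  integral_cond j hj := by
    have := cond_isProbabilityMeasure hj
    simp only [integral_const, probReal_univ]

lemma add (hf : MeanIndep f Z μ) (hg : MeanIndep g Z μ) :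
    MeanIndep (fun ω => f ω + g ω) Z μ where
  integrable := hf.integrable.add hg.integrable
  integral_cond j hj := by
    rw [integral_add (integrable_cond hf.integrable hj) (integrable_cond hg.integrable hj),
      integral_add hf.integrable hg.integrable, hf.integral_cond j hj, hg.integral_cond j hj]

lemma const_smul (hf : MeanIndep f Z μ) (a : ℝ) : MeanIndep (fun ω => a • f ω) Z μ where
  integrable := hf.integrable.smul a
  integral_cond j hj := by rw [integral_smul, integral_smul, hf.integral_cond j hj]

lemma sum {κ : Type*} {s : Finset κ} {F : κ → Ω → E} (hF : ∀ i ∈ s, MeanIndep (F i) Z μ) :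
    MeanIndep (fun ω => ∑ i ∈ s, F i ω) Z μ where
  integrable := integrable_finsetSum s fun i hi => (hF i hi).integrable
  integral_cond j hj := by
    rw [integral_finsetSum s fun i hi => integrable_cond (hF i hi).integrable hj,
      integral_finsetSum s fun i hi => (hF i hi).integrable]
    exact Finset.sum_congr rfl fun i hi => (hF i hi).integral_cond j hj

lemma pi {κ : Type*} [Fintype κ] {E : κ → Type*} [∀ l, NormedAddCommGroup (E l)]
    [∀ l, NormedSpace ℝ (E l)] [∀ l, CompleteSpace (E l)] {f : Ω → ∀ l, E l}
    (hf : ∀ l, MeanIndep (fun ω => f ω l) Z μ) : MeanIndep f Z μ where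
  integrable := Integrable.of_eval fun l => (hf l).integrable
  integral_cond j hj := by
    ext l
    rw [eval_integral fun l => integrable_cond (hf l).integrable hj,
      eval_integral fun l => (hf l).integrable, (hf l).integral_cond j hj]

lemma comp_quadPred [IsProbabilityMeasure μ] {d k : ℕ} {X : Ω → Fin d → ℝ}
    (hX : ∀ i, MeanIndep (fun ω => X ω i) Z μ)
    (hXX : ∀ i i', MeanIndep (fun ω => X ω i * X ω i') Z μ)
    (A : Fin k → Matrix (Fin d) (Fin d) ℝ) (B : Matrix (Fin k) (Fin d) ℝ) (c : Fin k → ℝ) :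
    MeanIndep (fun ω => quadPred A B c (X ω)) Z μ := by
  refine pi fun l => ?_
  simp only [quadPred, Matrix.mulVec, dotProduct, mul_assoc]
  have hquad : MeanIndep (fun ω => ∑ i, ∑ i', A l i i' * (X ω i * X ω i')) Z μ :=
    sum fun i _ => sum fun i' _ => (hXX i i').const_smul (A l i i')
  have hlin : MeanIndep (fun ω => ∑ i, B l i * X ω i) Z μ :=
    sum fun i _ => (hX i).const_smul (B l i)
  exact (hquad.add hlin).add (const Z (c l))

lemma map_integral_le_integral_cond [CompleteSpace E] [IsFiniteMeasure μ] (hf : MeanIndep f Z μ)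
    {φ : E → ℝ} (hφ : ConvexOn ℝ Set.univ φ) (hφ_cont : Continuous φ) {j : ι}
    (hj : μ (Z ⁻¹' {j}) ≠ 0) (hφf : Integrable (fun ω => φ (f ω)) μ[|Z ⁻¹' {j}]) :
    φ (∫ ω, f ω ∂μ) ≤ ∫ ω, φ (f ω) ∂μ[|Z ⁻¹' {j}] := by
  have := cond_isProbabilityMeasure hj
  rw [← hf.integral_cond j hj]
  exact hφ.map_integral_le hφ_cont.continuousOn isClosed_univ (.of_forall fun _ => Set.mem_univ _)
    (integrable_cond hf.integrable hj) hφf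

theorem integral_loss_integral_le [CompleteSpace E] [IsFiniteMeasure μ] [Finite ι]
    [MeasurableSpace ι] [DiscreteMeasurableSpace ι] (hf : MeanIndep f Z μ) (hZ : Measurable Z)
    {L : E → ι → ℝ} (hL : ∀ j, ConvexOn ℝ Set.univ fun v => L v j)
    (hL_cont : ∀ j, Continuous fun v => L v j) (hLf : Integrable (fun ω => L (f ω) (Z ω)) μ) :
    ∫ ω, L (∫ ω', f ω' ∂μ) (Z ω) ∂μ ≤ ∫ ω, L (f ω) (Z ω) ∂μ := by
  have := Fintype.ofFinite ι
  set m := ∫ ω, f ω ∂μ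
  have hLm : Integrable (fun ω => L m (Z ω)) μ := Integrable.of_finite.comp_measurable hZ
  rw [integral_eq_sum_integral_cond_fiber hZ hLm, integral_eq_sum_integral_cond_fiber hZ hLf]
  refine Finset.sum_le_sum fun j _ => ?_
  obtain hj | hj := eq_or_ne (μ (Z ⁻¹' {j})) 0
  · simp only [measureReal_def, hj, ENNReal.toReal_zero, zero_smul, le_refl]
  have := cond_isProbabilityMeasure hj
  have hLf_eq := ae_cond_fiber_apply_eq (μ := μ) hZ (fun ω => L (f ω)) j
  refine smul_le_smul_of_nonneg_left ?_ measureReal_nonneg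
  calc ∫ ω, L m (Z ω) ∂μ[|Z ⁻¹' {j}]
      = ∫ _, L m j ∂μ[|Z ⁻¹' {j}] := integral_congr_ae (ae_cond_fiber_apply_eq hZ (fun _ => L m) j)
    _ = L m j := by rw [integral_const, probReal_univ, one_smul]
    _ ≤ ∫ ω, L (f ω) j ∂μ[|Z ⁻¹' {j}] :=
      hf.map_integral_le_integral_cond (hL j) (hL_cont j) hj
        ((integrable_cond hLf hj).congr hLf_eq)
    _ = ∫ ω, L (f ω) (Z ω) ∂μ[|Z ⁻¹' {j}] := (integral_congr_ae hLf_eq).symm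

end MeanIndep

theorem quadratic_sufficiency_general
    {Ω ι : Type*} [MeasurableSpace Ω] {μ : Measure Ω} [IsProbabilityMeasure μ]
    [Finite ι] [MeasurableSpace ι] [DiscreteMeasurableSpace ι] {d k : ℕ}
    {X : Ω → Fin d → ℝ} {Z : Ω → ι} (hZ : Measurable Z)
    (hX : ∀ i, MeanIndep (fun ω => X ω i) Z μ)
    (hXX : ∀ i i', MeanIndep (fun ω => X ω i * X ω i') Z μ)
    {L : (Fin k → ℝ) → ι → ℝ} (hL : ∀ j, ConvexOn ℝ Set.univ fun v => L v j)
    (A : Fin k → Matrix (Fin d) (Fin d) ℝ) (B : Matrix (Fin k) (Fin d) ℝ) (c : Fin k → ℝ)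
    (hint : Integrable (fun ω => L (quadPred A B c (X ω)) (Z ω)) μ) :
    ∫ ω, L (∫ ω', quadPred A B c (X ω') ∂μ) (Z ω) ∂μ ≤
      ∫ ω, L (quadPred A B c (X ω)) (Z ω) ∂μ :=
  (MeanIndep.comp_quadPred hX hXX A B c).integral_loss_integral_le hZ hL
    (fun j => continuousOn_univ.1 ((hL j).continuousOn isOpen_univ)) hint

/-- **Quadratic sufficiency.** If every class-conditional mean and second moment matrix of `X`
equals the corresponding unconditional moment, then no quadratic predictor achieves expected
loss strictly below the trivially attainable loss, for a loss convex in its first argument. -/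
theorem quadratic_sufficiency
    {Ω : Type*} [MeasurableSpace Ω] (μ : Measure Ω) [IsProbabilityMeasure μ]
    {d k : ℕ}
    (X : Ω → Fin d → ℝ) (Z : Ω → Fin k)
    (hX : Measurable X) (hZ : Measurable Z)
    (hX2 : Integrable (fun ω => ∑ i, (X ω i) ^ 2) μ)
    (hXint : ∀ i, Integrable (fun ω => X ω i) μ)
    (hXXint : ∀ i i', Integrable (fun ω => X ω i * X ω i') μ)
    (hZpos : ∀ j : Fin k, 0 < μ (Z ⁻¹' {j}))
    (L : (Fin k → ℝ) → Fin k → ℝ)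
    (hL0 : ∀ v j, 0 ≤ L v j)
    (hLconvex : ∀ j, ConvexOn ℝ Set.univ (fun v => L v j))
    (hmean : ∀ (j : Fin k) (i : Fin d),
      ∫ ω, X ω i ∂(μ[|Z ⁻¹' {j}]) = ∫ ω, X ω i ∂μ)
    (hsecond : ∀ (j : Fin k) (i i' : Fin d),
      ∫ ω, X ω i * X ω i' ∂(μ[|Z ⁻¹' {j}]) = ∫ ω, X ω i * X ω i' ∂μ)
    (A : Fin k → Matrix (Fin d) (Fin d) ℝ) (hAsymm : ∀ j, (A j).IsSymm)
    (B : Matrix (Fin k) (Fin d) ℝ) (c : Fin k → ℝ)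
    (hint : Integrable (fun ω => L (quadPred A B c (X ω)) (Z ω)) μ) :
    ¬ (∫ ω, L (quadPred A B c (X ω)) (Z ω) ∂μ < ⨅ c' : Fin k → ℝ, ∫ ω, L c' (Z ω) ∂μ) := by
  have hbdd : BddBelow (Set.range fun c' => ∫ ω, L c' (Z ω) ∂μ) :=
    ⟨0, Set.forall_mem_range.2 fun c' => integral_nonneg fun ω => hL0 c' (Z ω)⟩
  exact not_lt.2 <| (ciInf_le hbdd _).trans <| quadratic_sufficiency_general hZ
    (fun i => ⟨hXint i, fun j _ => hmean j i⟩)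
    (fun i i' => ⟨hXXint i i', fun j _ => hsecond j i i'⟩) hLconvex A B c hint
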